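/- For every spider T on n vertices with exactly 4 legs, h(T) ≥ (n − 1)/3. -/

import Mathlib

open Finset

/-- The multiset of pairwise distances between distinct vertices of `S` in `G`
(one entry for each unordered pair of distinct vertices of `S`). -/
noncomputable def distMultiset {V : Type*} (G : SimpleGraph V) (S : Finset V) : Multiset ℕ :=
  letI := Classical.decEq V
  (S.sym2.filter fun p => ¬ p.IsDiag).val.map
    (Sym2.lift ⟨fun a b => G.dist a b, fun _ _ => SimpleGraph.dist_comm⟩)

/-- Two disjoint vertex sets are homometric if their distance multisets coincide. -/
def Homometric {V : Type*} (G : SimpleGraph V) (S₁ S₂ : Finset V) : Prop :=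
  Disjoint S₁ S₂ ∧ distMultiset G S₁ = distMultiset G S₂

/-- `h(G)`: the largest `h` such that `G` contains two disjoint homometric sets of
size `h` each. -/
noncomputable def homNumber {V : Type*} (G : SimpleGraph V) : ℕ :=
  sSup {h : ℕ | ∃ S₁ S₂ : Finset V, Homometric G S₁ S₂ ∧ S₁.card = h ∧ S₂.card = h}

/-- A spider with head `v` and `k` legs: a tree in which `v` has degree `k` and every
other vertex has degree at most `2`.  (The components of `T − v` are then exactly `k`
vertex-disjoint paths, each joined to `v` by one edge at an endpoint.) -/
def IsSpider {V : Type*} [Fintype V] (G : SimpleGraph V) [DecidableRel G.Adj]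
    (v : V) (k : ℕ) : Prop :=
  G.IsTree ∧ G.degree v = k ∧ ∀ u, u ≠ v → G.degree u ≤ 2

lemma distMultiset_image {V ι : Type*} (G : SimpleGraph V) (T : Finset ι) [DecidableEq V]
    [DecidableEq ι] (f : ι → V) (hf : Set.InjOn f T) :
    distMultiset G (T.image f) = (T.sym2.filter fun p => ¬ p.IsDiag).val.map
      (Sym2.lift ⟨fun a b => G.dist (f a) (f b), fun _ _ => SimpleGraph.dist_comm⟩) := by
  have hinj : Set.InjOn (Sym2.map f) (T.sym2.filter fun p => ¬ p.IsDiag : Finset (Sym2 ι)) := by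
    intro p hp q hq h
    induction p with | _ a b
    induction q with | _ c d
    simp only [coe_filter, Finset.mk_mem_sym2_iff, Set.mem_setOf_eq] at hp hq
    simp only [Sym2.map_mk, Sym2.eq_iff] at h ⊢
    rcases h with ⟨h1, h2⟩ | ⟨h1, h2⟩
    · exact Or.inl ⟨hf hp.1.1 hq.1.1 h1, hf hp.1.2 hq.1.2 h2⟩
    · exact Or.inr ⟨hf hp.1.1 hq.1.2 h1, hf hp.1.2 hq.1.1 h2⟩
  have himg : ((T.image f).sym2.filter fun p => ¬ p.IsDiag)
      = (T.sym2.filter fun p => ¬ p.IsDiag).image (Sym2.map f) := by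
    rw [Finset.sym2_image]
    ext p
    simp only [mem_filter, mem_image]
    constructor
    · rintro ⟨⟨q, hq, rfl⟩, hd⟩
      refine ⟨q, ⟨hq, ?_⟩, rfl⟩
      induction q with | _ a b
      simp only [Sym2.map_mk, Sym2.mk_isDiag_iff] at hd ⊢
      exact fun h => hd (by rw [h])
    · rintro ⟨q, ⟨hq, hd⟩, rfl⟩
      refine ⟨⟨q, hq, rfl⟩, ?_⟩
      induction q with | _ a b
      simp only [Sym2.map_mk, Sym2.mk_isDiag_iff, Finset.mk_mem_sym2_iff] at hd hq ⊢
      exact fun h => hd (hf hq.1 hq.2 h)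
  have h0 : distMultiset G (T.image f) = ((T.image f).sym2.filter fun p => ¬ p.IsDiag).val.map
      (Sym2.lift ⟨fun a b => G.dist a b, fun _ _ => SimpleGraph.dist_comm⟩) := by
    unfold distMultiset
    congr!
  rw [h0, himg, Finset.image_val_of_injOn hinj, Multiset.map_map]
  apply Multiset.map_congr rfl
  intro p _
  induction p with | _ a b
  simp

lemma le_homNumber {V ι : Type*} [Fintype V] (G : SimpleGraph V) (hc : G.Connected)
    (T : Finset ι) (f g : ι → V) (hf : Set.InjOn f T)
    (hd : ∀ x ∈ T, ∀ y ∈ T, G.dist (f x) (f y) = G.dist (g x) (g y))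
    (hdisj : ∀ x ∈ T, ∀ y ∈ T, f x ≠ g y) : T.card ≤ homNumber G := by
  classical
  have hg : Set.InjOn g T := by
    intro x hx y hy h
    apply hf hx hy
    rw [← hc.dist_eq_zero_iff, hd x hx y hy, h, SimpleGraph.dist_self]
  apply le_csSup
  · refine ⟨Fintype.card V, ?_⟩
    rintro h ⟨S, _, _, rfl, _⟩
    exact Finset.card_le_univ S
  · refine ⟨T.image f, T.image g, ⟨?_, ?_⟩, Finset.card_image_of_injOn hf,
      Finset.card_image_of_injOn hg⟩
    · rw [Finset.disjoint_left]
      intro a ha hb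
      obtain ⟨x, hx, rfl⟩ := Finset.mem_image.1 ha
      obtain ⟨y, hy, h⟩ := Finset.mem_image.1 hb
      exact hdisj x hx y hy h.symm
    · rw [distMultiset_image G T f hf, distMultiset_image G T g hg]
      apply Multiset.map_congr rfl
      intro p hp
      induction p with | _ a b
      simp only [mem_val, mem_filter, Finset.mk_mem_sym2_iff] at hp
      simpa using hd a hp.1.1 b hp.1.2

/-- Combinatorial core, for four legs with coordinates. -/
lemma core {V : Type*} [Fintype V] (G : SimpleGraph V) (hc : G.Connected)
    (P : Fin 4 → ℕ → V) (l : Fin 4 → ℕ)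
    (hsame : ∀ k i j, i ≤ j → j ≤ l k → G.dist (P k i) (P k j) = j - i)
    (hdiff : ∀ k k' i j, k ≠ k' → i ≤ l k → j ≤ l k' → G.dist (P k i) (P k' j) = i + j)
    (a b c d : Fin 4) (hab : a ≠ b) (hac : a ≠ c) (had : a ≠ d) (hbc : b ≠ c) (hbd : b ≠ d)
    (hcd : c ≠ d) (h1 : l a ≤ l c) (h2 : l b ≤ l d) :
    l a + l b + l c + l d ≤ 3 * homNumber G := by
  have hsame' : ∀ k i j, i ≤ l k → j ≤ l k → G.dist (P k i) (P k j) = (j - i) + (i - j) := by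
    intro k i j hi hj
    rcases le_total i j with h | h
    · rw [hsame k i j h hj]; omega
    · rw [SimpleGraph.dist_comm, hsame k j i h hi]; omega
  have hne : ∀ x y : V, G.dist x y ≠ 0 → x ≠ y := by
    rintro x y h rfl
    exact h SimpleGraph.dist_self
  by_cases hcase : 2 * (l a + l b) ≤ l c + l d
  · -- split the path through the head into two halves
    let Q : ℕ → V := fun i => if i ≤ l c then P c (l c - i) else P d (i - l c)
    have hQ : ∀ i j, i ≤ l c + l d → j ≤ l c + l d → G.dist (Q i) (Q j) = (j - i) + (i - j) := by
      intro i j hi hj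
      simp only [Q]
      split_ifs with h3 h4 h4
      · rw [hsame' _ _ _ (by omega) (by omega)]; omega
      · rw [hdiff _ _ _ _ hcd (by omega) (by omega)]; omega
      · rw [hdiff _ _ _ _ hcd.symm (by omega) (by omega)]; omega
      · rw [hsame' _ _ _ (by omega) (by omega)]; omega
    have key := le_homNumber G hc (Finset.range ((l c + l d + 1) / 2)) Q
      (fun i => Q (i + (l c + l d + 1) / 2)) ?_ ?_ ?_
    · rw [Finset.card_range] at key
      omega
    · intro i hi j hj h
      simp only [coe_range, Set.mem_Iio] at hi hj
      by_contra hij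
      exact hne _ _ (by rw [hQ i j (by omega) (by omega)]; omega) h
    · intro i hi j hj
      simp only [Finset.mem_range] at hi hj
      rw [hQ _ _ (by omega) (by omega), hQ _ _ (by omega) (by omega)]; omega
    · intro i hi j hj
      simp only [Finset.mem_range] at hi hj
      exact hne _ _ (by rw [hQ _ _ (by omega) (by omega)]; omega)
  · have key := le_homNumber G hc ((Finset.Icc 1 (l a)).disjSum (Finset.Icc 1 (l b)))
      (Sum.elim (P a) (P b)) (Sum.elim (P c) (P d)) ?_ ?_ ?_
    · rw [Finset.card_disjSum] at key
      simp at key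
      omega
    · intro x hx y hy h
      simp only [Finset.mem_coe] at hx hy
      by_contra hxy
      refine hne _ _ ?_ h
      rcases x with i | i <;> rcases y with j | j <;>
        simp only [inl_mem_disjSum, inr_mem_disjSum, Finset.mem_Icc, Sum.elim_inl, Sum.elim_inr,
          Sum.inl.injEq, Sum.inr.injEq] at hx hy hxy ⊢
      · rw [hsame' _ _ _ (by omega) (by omega)]; omega
      · rw [hdiff _ _ _ _ hab (by omega) (by omega)]; omega
      · rw [hdiff _ _ _ _ hab.symm (by omega) (by omega)]; omega
      · rw [hsame' _ _ _ (by omega) (by omega)]; omega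
    · intro x hx y hy
      rcases x with i | i <;> rcases y with j | j <;>
        simp only [inl_mem_disjSum, inr_mem_disjSum, Finset.mem_Icc, Sum.elim_inl,
          Sum.elim_inr] at hx hy ⊢
      · rw [hsame' _ _ _ (by omega) (by omega), hsame' _ _ _ (by omega) (by omega)]
      · rw [hdiff _ _ _ _ hab (by omega) (by omega), hdiff _ _ _ _ hcd (by omega) (by omega)]
      · rw [hdiff _ _ _ _ hab.symm (by omega) (by omega),
          hdiff _ _ _ _ hcd.symm (by omega) (by omega)]
      · rw [hsame' _ _ _ (by omega) (by omega), hsame' _ _ _ (by omega) (by omega)]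
    · intro x hx y hy
      apply hne
      rcases x with i | i <;> rcases y with j | j <;>
        simp only [inl_mem_disjSum, inr_mem_disjSum, Finset.mem_Icc, Sum.elim_inl,
          Sum.elim_inr] at hx hy ⊢
      · rw [hdiff _ _ _ _ hac (by omega) (by omega)]; omega
      · rw [hdiff _ _ _ _ had (by omega) (by omega)]; omega
      · rw [hdiff _ _ _ _ hbc (by omega) (by omega)]; omega
      · rw [hdiff _ _ _ _ hbd (by omega) (by omega)]; omega

/-- In a tree, the neighbour of `y` closer to the root is unique. -/
lemma parent_unique {V : Type*} (G : SimpleGraph V) (hT : G.IsTree) (v y x x' : V)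
    (h : G.Adj x y) (h' : G.Adj x' y) (hd : G.dist v y = G.dist v x + 1)
    (hd' : G.dist v y = G.dist v x' + 1) : x = x' := by
  obtain ⟨p, hp⟩ := hT.connected.exists_walk_length_eq_dist v x
  obtain ⟨q, hq⟩ := hT.connected.exists_walk_length_eq_dist v x'
  have h1 : (p.concat h).IsPath := (p.concat h).isPath_of_length_eq_dist (by simp [hp, hd])
  have h2 : (q.concat h').IsPath := (q.concat h').isPath_of_length_eq_dist (by simp [hq, hd'])
  have h3 := hT.isAcyclic.path_unique ⟨_, h1⟩ ⟨_, h2⟩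
  have h4 : p.concat h = q.concat h' := congrArg Subtype.val h3
  have h5 := congrArg SimpleGraph.Walk.penultimate h4
  simpa using h5

/-- Coordinates on a spider. -/
lemma coords {V : Type*} [Fintype V] (G : SimpleGraph V) [DecidableRel G.Adj] (v : V)
    (hS : IsSpider G v 4) : ∃ (P : Fin 4 → ℕ → V) (l : Fin 4 → ℕ),
    (∀ k i j, i ≤ j → j ≤ l k → G.dist (P k i) (P k j) = j - i) ∧
    (∀ k k' i j, k ≠ k' → i ≤ l k → j ≤ l k' → G.dist (P k i) (P k' j) = i + j) ∧
    Fintype.card V = l 0 + l 1 + l 2 + l 3 + 1 := by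
  classical
  obtain ⟨hT, hdeg, hdeg2⟩ := hS
  have hc := hT.connected
  have hpar : ∀ u, ∃ x, u ≠ v → G.Adj x u ∧ G.dist v u = G.dist v x + 1 := by
    intro u
    by_cases hu : u = v
    · exact ⟨v, fun h => absurd hu h⟩
    obtain ⟨p, hp⟩ := hc.exists_walk_length_eq_dist u v
    cases p with
    | nil => exact absurd rfl hu
    | @cons _ x _ h q =>
      refine ⟨x, fun _ => ⟨h.symm, ?_⟩⟩
      have h1 : G.dist x v ≤ q.length := SimpleGraph.dist_le q
      have h2 := hT.dist_eq_dist_add_one_of_adj v h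
      rw [SimpleGraph.Walk.length_cons] at hp
      rw [SimpleGraph.dist_comm (u := x)] at h1
      rw [SimpleGraph.dist_comm (u := u)] at hp
      omega
  choose par hpar using hpar
  have hpos : ∀ u, u ≠ v → 0 < G.dist v u := fun u hu => hc.pos_dist_of_ne hu.symm
  have hnev : ∀ u, 0 < G.dist v u → u ≠ v := by
    rintro u hu rfl
    simp at hu
  -- iterated parents
  have hiter : ∀ m u, m ≤ G.dist v u → G.dist v (par^[m] u) = G.dist v u - m ∧
      G.dist u (par^[m] u) ≤ m := by
    intro m
    induction m with
    | zero => intro u _; simp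
    | succ m ih =>
      intro u hu
      have hu' := hnev u (by omega)
      obtain ⟨hA, hD⟩ := hpar u hu'
      obtain ⟨i1, i2⟩ := ih (par u) (by omega)
      rw [Function.iterate_succ_apply]
      refine ⟨by omega, ?_⟩
      have t := hc.dist_triangle (u := u) (v := par u) (w := par^[m] (par u))
      have : G.dist u (par u) = 1 := SimpleGraph.dist_eq_one_iff_adj.2 hA.symm
      omega
  have hchild : ∀ u u', 2 ≤ G.dist v u → G.dist v u = G.dist v u' → par u = par u' → u = u' := by
    intro u u' hu huu hp
    by_contra hne
    obtain ⟨hA, hD⟩ := hpar u (hnev u (by omega))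
    obtain ⟨hA', hD'⟩ := hpar u' (hnev u' (by omega))
    have hxv := hnev (par u) (by omega)
    obtain ⟨hB, hE⟩ := hpar _ hxv
    have hsub : ({u, u', par (par u)} : Finset V) ⊆ G.neighborFinset (par u) := by
      intro z hz
      simp only [Finset.mem_insert, Finset.mem_singleton] at hz
      rw [SimpleGraph.mem_neighborFinset]
      rcases hz with rfl | rfl | rfl
      · exact hA
      · rw [hp]; exact hA'
      · exact hB.symm
    have hcard := Finset.card_le_card hsub
    have h3 : ({u, u', par (par u)} : Finset V).card = 3 := by
      rw [Finset.card_eq_three]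
      refine ⟨u, u', par (par u), hne, ?_, ?_, rfl⟩
      · intro h
        have := congrArg (G.dist v) h
        omega
      · intro h
        have := congrArg (G.dist v) h
        omega
    have := hdeg2 _ hxv
    rw [SimpleGraph.card_neighborFinset_eq_degree] at hcard
    omega
  have hinj : ∀ m u u', m < G.dist v u → G.dist v u = G.dist v u' → par^[m] u = par^[m] u' →
      u = u' := by
    intro m
    induction m with
    | zero => intro u u' _ _ h; exact h
    | succ m ih =>
      intro u u' h1 h2 h3
      simp only [Function.iterate_succ_apply] at h3
      obtain ⟨_, hD⟩ := hpar u (hnev u (by omega))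
      obtain ⟨_, hD'⟩ := hpar u' (hnev u' (by omega))
      exact hchild u u' (by omega) h2 (ih _ _ (by omega) (by omega) h3)
  let top : V → V := fun u => par^[G.dist v u - 1] u
  have htop_iter : ∀ m u, m < G.dist v u → top (par^[m] u) = top u := by
    intro m u hm
    simp only [top]
    rw [(hiter m u hm.le).1, ← Function.iterate_add_apply]
    congr 2
    omega
  have hsame0 : ∀ u u', u ≠ v → u' ≠ v → top u = top u' → G.dist v u ≤ G.dist v u' →
      u = par^[G.dist v u' - G.dist v u] u' := by
    intro u u' hu hu' ht hle
    have p1 := hpos u hu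
    have d1 := (hiter (G.dist v u' - G.dist v u) u' (by omega)).1
    have t1 := htop_iter (G.dist v u' - G.dist v u) u' (by omega)
    apply hinj (G.dist v u - 1) u _ (by omega) (by omega)
    rw [← ht] at t1
    simp only [top] at t1
    rw [← t1, d1]
    congr 2
    omega
  have hsame : ∀ u u', u ≠ v → u' ≠ v → top u = top u' → G.dist v u ≤ G.dist v u' →
      G.dist u u' = G.dist v u' - G.dist v u := by
    intro u u' hu hu' ht hle
    have e := hsame0 u u' hu hu' ht hle
    have d1 := (hiter (G.dist v u' - G.dist v u) u' (by omega)).2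
    rw [← e, SimpleGraph.dist_comm] at d1
    have := hc.dist_triangle (u := v) (v := u) (w := u')
    omega
  have hadj : ∀ x y, x ≠ v → y ≠ v → G.Adj x y → top x = top y := by
    have aux : ∀ x y, x ≠ v → y ≠ v → G.Adj x y → G.dist v y = G.dist v x + 1 →
        top x = top y := by
      intro x y hx hy h hd
      obtain ⟨hA, hD⟩ := hpar y hy
      have : par y = x := parent_unique G hT v y _ _ hA h hD hd
      have p := hpos x hx
      have := htop_iter 1 y (by omega)
      rw [Function.iterate_one] at this
      rw [← this]; congr 1; exact Eq.symm ‹par y = x›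
    intro x y hx hy h
    rcases hT.dist_eq_dist_add_one_of_adj v h with h1 | h1
    · exact (aux y x hy hx h.symm h1).symm
    · exact aux x y hx hy h h1
  have hwalk : ∀ (x y : V) (p : G.Walk x y), v ∉ p.support → top x = top y := by
    intro x y p
    induction p with
    | nil => intro _; rfl
    | @cons a b c h q ih =>
      intro hv
      simp only [SimpleGraph.Walk.support_cons, List.mem_cons, not_or] at hv
      rw [← ih hv.2]
      refine hadj _ _ (Ne.symm hv.1) ?_ h
      rintro rfl
      exact hv.2 q.start_mem_support
  have hdiff : ∀ u u', top u ≠ top u' → G.dist u u' = G.dist v u + G.dist v u' := by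
    intro u u' ht
    obtain ⟨p, hp⟩ := hc.exists_walk_length_eq_dist u u'
    have hv : v ∈ p.support := by
      by_contra h
      exact ht (hwalk _ _ p h)
    have e := congrArg SimpleGraph.Walk.length (p.take_spec hv)
    rw [SimpleGraph.Walk.length_append] at e
    have d1 := SimpleGraph.dist_le (p.takeUntil v hv)
    have d2 := SimpleGraph.dist_le (p.dropUntil v hv)
    have d3 := hc.dist_triangle (u := u) (v := v) (w := u')
    rw [SimpleGraph.dist_comm (u := u) (v := v)] at d1 d3
    omega
  let L : V → Finset V := fun w => Finset.univ.filter fun u => u ≠ v ∧ top u = w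
  have hex : ∀ w i, ∃ u, 1 ≤ i → i ≤ (L w).card → u ≠ v ∧ top u = w ∧ G.dist v u = i := by
    intro w i
    by_contra! hcon
    have h1 := (hcon v).1
    have h2 := (hcon v).2.1
    have hno : ∀ u, u ≠ v → top u = w → G.dist v u ≠ i := fun u => (hcon u).2.2
    have hmaps : ∀ u ∈ L w, G.dist v u ∈ Finset.Ico 1 i := by
      intro u hu
      simp only [L, Finset.mem_filter, Finset.mem_univ, true_and] at hu
      rw [Finset.mem_Ico]
      refine ⟨hpos u hu.1, ?_⟩
      by_contra hge
      have d := (hiter (G.dist v u - i) u (by omega)).1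
      have t := htop_iter (G.dist v u - i) u (by omega)
      exact hno (par^[G.dist v u - i] u) (hnev _ (by omega)) (t.trans hu.2) (by omega)
    have hle := Finset.card_le_card_of_injOn (fun u => G.dist v u) hmaps (by
      intro x hx y hy hxy
      simp only [L, Finset.coe_filter, Finset.mem_univ, true_and, Set.mem_setOf_eq] at hx hy hxy
      have := hsame x y hx.1 hy.1 (hx.2.trans hy.2.symm) hxy.le
      rw [← hc.dist_eq_zero_iff]
      omega)
    rw [Nat.card_Ico] at hle
    omega
  choose Q hQ using hex
  have hcard4 : (G.neighborFinset v).card = 4 := by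
    rw [SimpleGraph.card_neighborFinset_eq_degree, hdeg]
  let e := (Finset.equivFinOfCardEq hcard4).symm
  let P : V → ℕ → V := fun w i => if i = 0 then v else Q w i
  have hP : ∀ w i, i ≤ (L w).card → G.dist v (P w i) = i := by
    intro w i hi
    simp only [P]
    split_ifs with h
    · simp [h]
    · exact (hQ w i (by omega) hi).2.2
  refine ⟨fun k => P (e k), fun k => (L (e k)).card, ?_, ?_, ?_⟩
  · intro k i j hij hj
    dsimp only at hj ⊢
    by_cases hi0 : i = 0
    · subst hi0
      have := hP (e k) j hj
      simpa [P] using this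
    · have h1 := hQ (e k) i (by omega) (by omega)
      have h2 := hQ (e k) j (by omega) (by omega)
      simp only [P, hi0, if_false, show j ≠ 0 by omega]
      rw [hsame _ _ h1.1 h2.1 (h1.2.1.trans h2.2.1.symm) (by omega)]
      omega
  · intro k k' i j hkk hi hj
    dsimp only at hi hj ⊢
    by_cases hi0 : i = 0
    · subst hi0
      have := hP (e k') j hj
      simpa [P] using this
    by_cases hj0 : j = 0
    · subst hj0
      have := hP (e k) i hi
      rw [SimpleGraph.dist_comm]
      simpa [P] using this
    have h1 := hQ (e k) i (by omega) (by omega)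
    have h2 := hQ (e k') j (by omega) (by omega)
    simp only [P, hi0, hj0, if_false]
    rw [hdiff _ _ ?_, h1.2.2, h2.2.2]
    rw [h1.2.1, h2.2.1]
    intro h
    exact hkk (e.injective (Subtype.ext h))
  · have hsum : (Finset.univ.erase v).card = ∑ w ∈ G.neighborFinset v, (L w).card := by
      rw [Finset.card_eq_sum_card_fiberwise (f := top) (t := G.neighborFinset v)]
      · apply Finset.sum_congr rfl
        intro w _
        congr 1
        ext u
        simp [L]
      · intro u hu
        have hu : u ≠ v := by simpa using hu
        have p := hpos u hu
        have := (hiter (G.dist v u - 1) u (by omega)).1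
        simp only [Finset.mem_coe, SimpleGraph.mem_neighborFinset]
        rw [← SimpleGraph.dist_eq_one_iff_adj]
        simp only [top]
        omega
    rw [← Finset.sum_coe_sort, ← Equiv.sum_comp e, Fin.sum_univ_four,
      Finset.card_erase_of_mem (Finset.mem_univ v), Finset.card_univ] at hsum
    have : 0 < Fintype.card V := Fintype.card_pos_iff.2 ⟨v⟩
    dsimp only
    omega

/-- For every spider `T` on `n` vertices with exactly `4` legs, `h(T) ≥ (n − 1)/3`. -/
theorem stmt9 {V : Type*} [Fintype V] (G : SimpleGraph V) [DecidableRel G.Adj] (v : V)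
    (hS : IsSpider G v 4) (n : ℕ) (hn : Fintype.card V = n) :
    ((n : ℝ) - 1) / 3 ≤ homNumber G := by
  obtain ⟨P, l, h1, h2, h3⟩ := coords G v hS
  have hc := hS.1.connected
  have key : l 0 + l 1 + l 2 + l 3 ≤ 3 * homNumber G := by
    rcases le_total (l 0) (l 2) with a | a <;> rcases le_total (l 1) (l 3) with b | b
    · exact core G hc P l h1 h2 0 1 2 3 (by decide) (by decide) (by decide) (by decide)
        (by decide) (by decide) a b
    · have := core G hc P l h1 h2 0 3 2 1 (by decide) (by decide) (by decide) (by decide)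
        (by decide) (by decide) a b
      omega
    · have := core G hc P l h1 h2 2 1 0 3 (by decide) (by decide) (by decide) (by decide)
        (by decide) (by decide) a b
      omega
    · have := core G hc P l h1 h2 2 3 0 1 (by decide) (by decide) (by decide) (by decide)
        (by decide) (by decide) a b
      omega
  have key2 : (n : ℝ) ≤ 3 * (homNumber G : ℝ) + 1 := by
    have : n ≤ 3 * homNumber G + 1 := by omega
    exact_mod_cast this
  linarith
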